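/- Let ν ∈ N_d(n), let j ∈ J(ν) be a break point of ν, and let ν^j be the unique maximal element of {η ∈ N_d(n) : η ≼ ν and s_j(η) > s_j(ν)} (which exists). Then δ(ν^j, ν) = 1, i.e. Σ_{i=1}^{n−1} (⌈s_i(ν^j)⌉ − ⌈s_i(ν)⌉) = 1. (GL_n instance of Lemma 2.2(3).) -/

import Mathlib

/-- The `j`-th partial sum `s_j(ν) = ν_0 + … + ν_{j-1}` of a tuple (0-indexed). -/
def psum (ν : ℕ → ℚ) (j : ℕ) : ℚ := ∑ i ∈ Finset.range j, ν i

/-- `ν` (given by its values on `{0, …, n-1}`) is a Newton point for `GL_n`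
with endpoint `d`: nondecreasing, total sum `d`, and the partial sum at every
break point is an integer. -/
def IsNewton (n : ℕ) (d : ℤ) (ν : ℕ → ℚ) : Prop :=
  (∀ i, i + 1 < n → ν i ≤ ν (i + 1)) ∧
  psum ν n = (d : ℚ) ∧
  ∀ j, 0 < j → j < n → ν (j - 1) < ν j → ∃ m : ℤ, psum ν j = (m : ℚ)

/-- `j` is a break point of `ν` (in `1, …, n-1`; `ν (j-1) < ν j` is `ν_j < ν_{j+1}`
in the 1-based notation of the paper). -/
def IsBreak (n : ℕ) (ν : ℕ → ℚ) (j : ℕ) : Prop := 0 < j ∧ j < n ∧ ν (j - 1) < ν j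

/-- The dominance order: `ν' ≼ ν` iff `s_j(ν') ≥ s_j(ν)` for all `1 ≤ j ≤ n`. -/
def Preceq (n : ℕ) (ν' ν : ℕ → ℚ) : Prop := ∀ j, 1 ≤ j → j ≤ n → psum ν j ≤ psum ν' j



/-- A rational number separating two finite families. -/
lemma sep_finset (A B : Finset ℚ) (h : ∀ x ∈ A, ∀ y ∈ B, x ≤ y) :
    ∃ s, (∀ x ∈ A, x ≤ s) ∧ ∀ y ∈ B, s ≤ y := by
  by_cases hA : A.Nonempty
  · exact ⟨A.max' hA, fun x hx => A.le_max' x hx, fun y hy => h _ (A.max'_mem hA) y hy⟩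
  · rw [Finset.not_nonempty_iff_eq_empty] at hA
    subst hA
    by_cases hB : B.Nonempty
    · exact ⟨B.min' hB, by simp, fun y hy => B.min'_le y hy⟩
    · rw [Finset.not_nonempty_iff_eq_empty] at hB
      subst hB
      exact ⟨0, by simp, by simp⟩

/-- Existence of a supporting line under `f` through `(i, h)`. -/
lemma support_line (n : ℕ) (f : ℕ → ℚ) (i : ℕ) (h : ℚ) (hi : h ≤ f i)
    (hc : ∀ a b : ℕ, a < i → i < b → b ≤ n →
      h * ((b : ℚ) - a) ≤ ((b : ℚ) - i) * f a + ((i : ℚ) - a) * f b) :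
    ∃ s : ℚ, ∀ k ≤ n, h + s * ((k : ℚ) - i) ≤ f k := by
  obtain ⟨s, hs1, hs2⟩ := sep_finset
    ((Finset.range i).image fun a => (h - f a) / ((i : ℚ) - a))
    ((Finset.Ioc i n).image fun b => (f b - h) / ((b : ℚ) - i)) (by
      intro x hx y hy
      simp only [Finset.mem_image, Finset.mem_range, Finset.mem_Ioc] at hx hy
      obtain ⟨a, ha, rfl⟩ := hx
      obtain ⟨b, ⟨hb, hbn⟩, rfl⟩ := hy
      have h1 : (0 : ℚ) < i - a := by
        have : (a : ℚ) < i := by exact_mod_cast ha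
        linarith
      have h2 : (0 : ℚ) < b - i := by
        have : (i : ℚ) < b := by exact_mod_cast hb
        linarith
      rw [div_le_div_iff₀ h1 h2]
      have := hc a b ha hb hbn
      linarith)
  refine ⟨s, fun k hk => ?_⟩
  rcases lt_trichotomy k i with hki | rfl | hki
  · have h1 : (0 : ℚ) < i - k := by
      have : (k : ℚ) < i := by exact_mod_cast hki
      linarith
    have := hs1 _ (Finset.mem_image_of_mem _ (Finset.mem_range.2 hki))
    rw [div_le_iff₀ h1] at this
    linarith
  · simpa using hi
  · have h1 : (0 : ℚ) < k - i := by
      have : (i : ℚ) < k := by exact_mod_cast hki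
      linarith
    have := hs2 _ (Finset.mem_image_of_mem _ (Finset.mem_Ioc.2 ⟨hki, hk⟩))
    rw [le_div_iff₀ h1] at this
    linarith

/-- At each `i` there is a supporting line touching `f` at `i` or on both sides of `i`. -/
lemma hull_point (n : ℕ) (f : ℕ → ℚ) (i : ℕ) :
    ∃ h s : ℚ, (i ≤ n → h ≤ f i) ∧ (∀ k ≤ n, h + s * ((k : ℚ) - i) ≤ f k) ∧
      (h = f i ∨ ∃ a b : ℕ, a < i ∧ i < b ∧ b ≤ n ∧
        f a = h + s * ((a : ℚ) - i) ∧ f b = h + s * ((b : ℚ) - i)) := by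
  by_cases H : ∀ a b : ℕ, a < i → i < b → b ≤ n →
      f i * ((b : ℚ) - a) ≤ ((b : ℚ) - i) * f a + ((i : ℚ) - a) * f b
  · obtain ⟨s, hs⟩ := support_line n f i (f i) le_rfl H
    exact ⟨f i, s, fun _ => le_rfl, hs, Or.inl rfl⟩
  · push Not at H
    obtain ⟨a₀, b₀, ha₀, hb₀, hbn₀, hlt⟩ := H
    let c : ℕ × ℕ → ℚ := fun p =>
      (((p.2 : ℚ) - i) * f p.1 + ((i : ℚ) - p.1) * f p.2) / ((p.2 : ℚ) - p.1)
    obtain ⟨⟨a, b⟩, hp, hmin⟩ := Finset.exists_min_image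
      (Finset.range i ×ˢ Finset.Ioc i n) c ⟨(a₀, b₀), by simp [*]⟩
    simp only [Finset.mem_product, Finset.mem_range, Finset.mem_Ioc] at hp hmin
    obtain ⟨ha, hb, hbn⟩ := hp
    have pos : ∀ a b : ℕ, a < i → i < b → (0 : ℚ) < i - a ∧ (0 : ℚ) < b - i := by
      intro a b ha hb
      have h1 : (a : ℚ) < i := by exact_mod_cast ha
      have h2 : (i : ℚ) < b := by exact_mod_cast hb
      constructor <;> linarith
    have hcm : ∀ a' b' : ℕ, a' < i → i < b' → b' ≤ n →
        c (a, b) * ((b' : ℚ) - a') ≤ ((b' : ℚ) - i) * f a' + ((i : ℚ) - a') * f b' := by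
      intro a' b' h1 h2 h3
      have := hmin (a', b') ⟨h1, h2, h3⟩
      obtain ⟨p1, p2⟩ := pos a' b' h1 h2
      have p3 : (0 : ℚ) < b' - a' := by linarith
      have h4 : c (a', b') =
        (((b' : ℚ) - i) * f a' + ((i : ℚ) - a') * f b') / ((b' : ℚ) - a') := rfl
      rw [h4, le_div_iff₀ p3] at this
      exact this
    have hci : c (a, b) ≤ f i := by
      have h5 := hcm a₀ b₀ ha₀ hb₀ hbn₀
      obtain ⟨p1, p2⟩ := pos a₀ b₀ ha₀ hb₀
      have p3 : (0 : ℚ) < b₀ - a₀ := by linarith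
      exact (lt_of_mul_lt_mul_right (h5.trans_lt hlt) p3.le).le
    obtain ⟨s, hs⟩ := support_line n f i _ hci hcm
    obtain ⟨p1, p2⟩ := pos a b ha hb
    have p3 : (0 : ℚ) < b - a := by linarith
    have hceq : c (a, b) * ((b : ℚ) - a) = ((b : ℚ) - i) * f a + ((i : ℚ) - a) * f b :=
      div_mul_cancel₀ _ p3.ne'
    have e1 := hs a (by omega)
    have e2 := hs b hbn
    refine ⟨c (a, b), s, fun _ => hci, hs, Or.inr ⟨a, b, ha, hb, hbn, ?_, ?_⟩⟩
    · refine le_antisymm ?_ e1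
      refine le_of_mul_le_mul_left ?_ p2
      nlinarith [mul_le_mul_of_nonneg_left e2 p1.le]
    · refine le_antisymm ?_ e2
      refine le_of_mul_le_mul_left ?_ p1
      nlinarith [mul_le_mul_of_nonneg_left e1 p2.le]

/-- Comparison of affine functions between two points. -/
lemma affine_le (h s h' s' x y a b k : ℚ) (hab : a < b) (hak : a ≤ k) (hkb : k ≤ b)
    (e1 : h + s * (a - x) ≤ h' + s' * (a - y)) (e2 : h + s * (b - x) ≤ h' + s' * (b - y)) :
    h + s * (k - x) ≤ h' + s' * (k - y) := by
  have p : (0 : ℚ) < b - a := by linarith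
  refine le_of_mul_le_mul_left ?_ p
  have f1 := mul_le_mul_of_nonneg_left e1 (show 0 ≤ b - k by linarith)
  have f2 := mul_le_mul_of_nonneg_left e2 (show 0 ≤ k - a by linarith)
  nlinarith

lemma psum_succ (ν : ℕ → ℚ) (k : ℕ) : psum ν (k + 1) = psum ν k + ν k := by
  simp [psum, Finset.sum_range_succ]

lemma psum_right (n : ℕ) (ν : ℕ → ℚ) (hm : ∀ i, i + 1 < n → ν i ≤ ν (i + 1)) (i : ℕ) :
    ∀ k, i ≤ k → (k < n → ν i ≤ ν k) ∧
      (k ≤ n → psum ν i + ν i * ((k : ℚ) - i) ≤ psum ν k) := by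
  intro k hk
  induction k, hk using Nat.le_induction with
  | base => simp
  | succ k hk ih =>
    refine ⟨fun h => (ih.1 (by omega)).trans (hm k h), fun h => ?_⟩
    have h1 := ih.1 (by omega)
    have h2 := ih.2 (by omega)
    rw [psum_succ]
    push_cast
    linarith

lemma psum_left (n : ℕ) (ν : ℕ → ℚ) (hm : ∀ i, i + 1 < n → ν i ≤ ν (i + 1)) (i : ℕ)
    (hi0 : 0 < i) (hi : i < n) (k : ℕ) (hk : k ≤ i) :
    psum ν i + ν (i - 1) * ((k : ℚ) - i) ≤ psum ν k := by
  induction hk using Nat.decreasingInduction with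
  | self => simp
  | of_succ k hk ih =>
    rw [psum_succ] at ih
    push_cast at ih
    have := (psum_right n ν hm k (i - 1) (by omega)).1 (by omega)
    linarith

theorem newton_max_below_breakpoint_delta_one (n : ℕ) (d : ℤ) (hn : 1 ≤ n)
    (ν : ℕ → ℚ) (hν : IsNewton n d ν) (j : ℕ) (hj : IsBreak n ν j)
    (νj : ℕ → ℚ) (hνj : IsNewton n d νj) (hprec : Preceq n νj ν)
    (hbrk : psum ν j < psum νj j)
    (hmax : ∀ η : ℕ → ℚ, IsNewton n d η → Preceq n η ν → psum ν j < psum η j →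
      Preceq n η νj) :
    ∑ i ∈ Finset.Icc 1 (n - 1), (⌈psum νj i⌉ - ⌈psum ν i⌉) = 1 := by
  obtain ⟨hj0, hjn, hjb⟩ := hj
  obtain ⟨hm, hend, hint⟩ := hν
  obtain ⟨m, hmj⟩ := hint j hj0 hjn hjb
  let F : ℕ → ℤ := fun i => ⌈psum ν i⌉ + if i = j then 1 else 0
  let f : ℕ → ℚ := fun i => (F i : ℚ)
  have hF : ∀ i, i ≠ j → F i = ⌈psum ν i⌉ := by intro i hi; simp [F, hi]
  have hFj : F j = m + 1 := by simp [F, hmj]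
  have hSf : ∀ i, psum ν i ≤ f i := by
    intro i
    refine (Int.le_ceil _).trans ?_
    have : ⌈psum ν i⌉ ≤ F i := by
      simp only [F]; split_ifs <;> omega
    exact Int.cast_le.2 this
  have hSfj : psum ν j < f j := by
    have : f j = m + 1 := by simp only [f]; rw [hFj]; push_cast; rfl
    rw [this, hmj]; linarith
  choose H s hHf hline hcase using hull_point n f
  have f0 : f 0 = 0 := by
    simp only [f]; rw [hF 0 (by omega)]; simp [psum]
  have fn : f n = d := by
    simp only [f]; rw [hF n (by omega), hend]; simp
  have H0 : H 0 = 0 := by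
    rcases hcase 0 with h | ⟨a, b, ha, _⟩
    · rw [h, f0]
    · omega
  have Hn : H n = d := by
    rcases hcase n with h | ⟨a, b, _, hb, hbn, _⟩
    · rw [h, fn]
    · omega
  -- chords bound H
  have hchord : ∀ i a b k : ℕ, a < b → b ≤ n → a ≤ k → k ≤ b →
      f a = H i + s i * ((a : ℚ) - i) → f b = H i + s i * ((b : ℚ) - i) →
      ∀ i', H i' + s i' * ((k : ℚ) - i') ≤ H i + s i * ((k : ℚ) - i) := by
    intro i a b k hab hbn hak hkb ea eb i'
    refine affine_le _ _ _ _ _ _ a b k (by exact_mod_cast hab) (by exact_mod_cast hak)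
      (by exact_mod_cast hkb) ?_ ?_
    · rw [← ea]; exact hline i' a (by omega)
    · rw [← eb]; exact hline i' b hbn
  have hsup : ∀ i k, k ≤ n → H i + s i * ((k : ℚ) - i) ≤ H k := by
    intro i k hk
    rcases hcase k with h | ⟨a, b, ha, hb, hbn, ea, eb⟩
    · rw [h]; exact hline i k hk
    · have := hchord k a b k (by omega) hbn ha.le hb.le ea eb i
      simpa using this
  have hconv : ∀ i, i + 2 ≤ n → H (i + 1) - H i ≤ H (i + 2) - H (i + 1) := by
    intro i hi
    have h1 := hsup (i + 1) i (by omega)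
    have h2 := hsup (i + 1) (i + 2) (by omega)
    push_cast at h1 h2
    linarith
  -- comparison with ν
  have key : ∀ i, 0 < i → i < n → H i = f i ∨ (psum ν i ≤ H i ∧
      (ν (i - 1) < ν i → psum ν i < H i)) := by
    intro i hi0 hin
    rcases hcase i with h | ⟨a, b, ha, hb, hbn, ea, eb⟩
    · exact Or.inl h
    · right
      have p1 : (0 : ℚ) < i - a := by
        have : (a : ℚ) < i := by exact_mod_cast ha
        linarith
      have p2 : (0 : ℚ) < b - i := by
        have : (i : ℚ) < b := by exact_mod_cast hb
        linarith
      have p3 : (0 : ℚ) < b - a := by linarith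
      have l1 := (psum_left n ν hm i hi0 hin a ha.le).trans (hSf a)
      have l2 := ((psum_right n ν hm i b hb.le).2 hbn).trans (hSf b)
      rw [ea] at l1
      rw [eb] at l2
      have g1 := mul_le_mul_of_nonneg_left l1 p2.le
      have g2 := mul_le_mul_of_nonneg_left l2 p1.le
      have g : ((b : ℚ) - a) * psum ν i + (ν i - ν (i - 1)) * (((b : ℚ) - i) * (i - a))
          ≤ ((b : ℚ) - a) * H i := by nlinarith
      have p4 := mul_pos p2 p1
      constructor
      · have hmi : ν (i - 1) ≤ ν i := by
          have := hm (i - 1) (by omega)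
          rwa [Nat.sub_add_cancel hi0] at this
        refine le_of_mul_le_mul_left ?_ p3
        have := mul_nonneg (sub_nonneg.2 hmi) p4.le
        linarith
      · intro hlt
        refine lt_of_mul_lt_mul_left ?_ p3.le
        have := mul_pos (sub_pos.2 hlt) p4
        linarith
  let η : ℕ → ℚ := fun i => H (i + 1) - H i
  have hη : ∀ k, psum η k = H k := by
    intro k
    simp only [psum, η]
    rw [Finset.sum_range_sub, H0, sub_zero]
  have hT : Preceq n η νj := by
    refine hmax η ⟨fun i hi => hconv i (by omega), by rw [hη, Hn], ?_⟩ ?_ ?_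
    · intro k hk0 hkn hlt
      rw [hη]
      rcases hcase k with h | ⟨a, b, ha, hb, hbn, ea, eb⟩
      · exact ⟨F k, h⟩
      · exfalso
        obtain ⟨k, rfl⟩ : ∃ k', k = k' + 1 := ⟨k - 1, by omega⟩
        have h1 := hchord (k + 1) a b k (by omega) hbn (by omega) (by omega) ea eb k
        have h2 := hchord (k + 1) a b (k + 2) (by omega) hbn (by omega) (by omega) ea eb (k + 2)
        simp only [η, Nat.add_sub_cancel] at hlt
        have e : k + 1 + 1 = k + 2 := rfl
        rw [e] at hlt
        push_cast at h1 h2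
        linarith
    · intro k hk hkn
      rw [hη]
      rcases hkn.eq_or_lt with rfl | hlt
      · rw [hend, Hn]
      · rcases key k hk hlt with h | h
        · rw [h]; exact hSf k
        · exact h.1
    · rw [hη]
      rcases key j hj0 hjn with h | h
      · rw [h]; exact hSfj
      · exact h.2 hjb
  have hle : ∀ i, 1 ≤ i → i ≤ n → ⌈psum νj i⌉ ≤ F i := by
    intro i h1 h2
    rw [Int.ceil_le]
    have := hT i h1 h2
    rw [hη] at this
    exact this.trans (hHf i h2)
  rw [Finset.sum_eq_single_of_mem j (by simp; omega)]
  · have h1 := hle j hj0 hjn.le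
    rw [hFj] at h1
    have h2 : m < ⌈psum νj j⌉ := by rw [Int.lt_ceil, ← hmj]; exact hbrk
    rw [hmj, Int.ceil_intCast]
    omega
  · intro i hi hij
    rw [Finset.mem_Icc] at hi
    have h1 := hle i hi.1 (by omega)
    rw [hF i hij] at h1
    have h2 : ⌈psum ν i⌉ ≤ ⌈psum νj i⌉ := Int.ceil_le_ceil (hprec i hi.1 (by omega))
    omega
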